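/- arXiv:2207.14417 — 7 statements merged into one kernel-verified Lean document; each statement's English description precedes it below -/
import Mathlib

section
/- Value iteration converges to the value from below: letting L_0 be the value function with L_0(s) = 1 for s ∈ F and L_0(s) = 0 otherwise, the supremum of the iterates equals the least fixpoint of the Bellman operator, i.e., ⨆_{n∈ℕ} B^n(L_0) = lfp(B) = V. -/
/-!
The Bellman operator `B` is monotone (transition weights are nonnegative) and, the state and
action sets being finite, continuous for the product topology on `S → [0,1]`
(`SSG.bellman_mono`, `SSG.bellman_continuous`). Every value of `B` dominates `L₀`, so `Bⁿ L₀` is an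
increasing sequence; it converges pointwise to its supremum, and by continuity the supremum is a
fixpoint of `B`, hence above the least one. Conversely a pre-fixpoint `x` satisfies
`L₀ ≤ B x ≤ x`, so by monotonicity it bounds all iterates.
-/

noncomputable section
open Classical Finset

instance : Fact ((0:ℝ) ≤ 1) := ⟨zero_le_one⟩

/-- A finite simple stochastic game: states are partitioned into Maximizer states
(`isMax`) and Minimizer states, each state has a nonempty finite set of available
actions, the transition function is a probability distribution for every available
action, and `F` is the set of goal states. -/
structure SSG (S A : Type) [Fintype S] [Nonempty S] [Fintype A] where
  isMax : S → Prop
  Av : S → Finset A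
  avNonempty : ∀ s, (Av s).Nonempty
  tr : S → A → S → ℝ
  tr_nonneg : ∀ s a, a ∈ Av s → ∀ s', 0 ≤ tr s a s'
  tr_sum : ∀ s a, a ∈ Av s → ∑ s', tr s a s' = 1
  F : Set S

variable {S A : Type} [Fintype S] [Nonempty S] [Fintype A]

/-- The expected value `Σ_{s'} δ(s,a,s')·f(s')` of `f` after playing `a` in `s`. -/
def SSG.sumR (G : SSG S A) (f : S → unitInterval) (s : S) (a : A) : ℝ :=
  ∑ s', G.tr s a s' * (f s' : ℝ)

lemma SSG.sumR_mem (G : SSG S A) (f : S → unitInterval) {s : S} {a : A} (ha : a ∈ G.Av s) :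
    G.sumR f s a ∈ Set.Icc (0 : ℝ) 1 := by
  constructor
  · exact Finset.sum_nonneg fun s' _ => mul_nonneg (G.tr_nonneg s a ha s') (f s').2.1
  · calc ∑ s', G.tr s a s' * (f s' : ℝ) ≤ ∑ s', G.tr s a s' * 1 := by
          refine Finset.sum_le_sum fun s' _ => ?_
          exact mul_le_mul_of_nonneg_left (f s').2.2 (G.tr_nonneg s a ha s')
    _ = 1 := by simpa using G.tr_sum s a ha

/-- The Bellman operator: `1` on goal states, the maximum over available actions at
Maximizer states, the minimum over available actions at Minimizer states.
Value functions are maps `S → [0,1]`, ordered pointwise. -/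
noncomputable def SSG.bellman (G : SSG S A) (f : S → unitInterval) : S → unitInterval :=
  fun s =>
    if s ∈ G.F then 1
    else if G.isMax s then
      (G.Av s).attach.sup' (Finset.attach_nonempty_iff.mpr (G.avNonempty s))
        (fun a => (⟨G.sumR f s a.1, G.sumR_mem f a.2⟩ : unitInterval))
    else
      (G.Av s).attach.inf' (Finset.attach_nonempty_iff.mpr (G.avNonempty s))
        (fun a => (⟨G.sumR f s a.1, G.sumR_mem f a.2⟩ : unitInterval))

/-- The Knaster–Tarski least fixpoint of an operator on a complete lattice. -/
def lfpOf {P : Type*} [CompleteLattice P] (Φ : P → P) : P := sInf {x | Φ x ≤ x}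

/-- The initial lower bound of value iteration: `1` on goal states, `0` elsewhere. -/
noncomputable def SSG.L0 (G : SSG S A) : S → unitInterval :=
  fun s => if s ∈ G.F then 1 else 0

namespace SSG

lemma sumR_mono (G : SSG S A) {f g : S → unitInterval} (h : f ≤ g) {s : S} {a : A}
    (ha : a ∈ G.Av s) : G.sumR f s a ≤ G.sumR g s a :=
  Finset.sum_le_sum fun s' _ => mul_le_mul_of_nonneg_left (h s') (G.tr_nonneg s a ha s')

lemma sumR_continuous (G : SSG S A) (s : S) (a : A) : Continuous fun f => G.sumR f s a := by
  unfold sumR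
  fun_prop

lemma bellman_mono (G : SSG S A) : Monotone G.bellman := by
  intro f g h s
  unfold bellman
  split_ifs
  · exact le_rfl
  · exact Finset.sup'_mono_fun fun a _ => G.sumR_mono h a.2
  · exact Finset.inf'_mono_fun fun a _ => G.sumR_mono h a.2

lemma bellman_continuous (G : SSG S A) : Continuous G.bellman := by
  refine continuous_pi fun s => ?_
  unfold bellman
  split_ifs
  · exact continuous_const
  · exact Continuous.finset_sup'_apply _ fun a _ => (G.sumR_continuous s a.1).subtype_mk _
  · exact Continuous.finset_inf'_apply _ fun a _ => (G.sumR_continuous s a.1).subtype_mk _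

lemma L0_le_bellman (G : SSG S A) (f : S → unitInterval) : G.L0 ≤ G.bellman f := by
  intro s
  by_cases hs : s ∈ G.F
  · simp [L0, bellman, hs]
  · simp only [L0, hs, if_false]
    exact unitInterval.nonneg'

end SSG

/-- Value iteration converges from below to the value `V = lfp(B)`. -/
theorem SSG.vi_converges (G : SSG S A) :
    (⨆ n : ℕ, G.bellman^[n] G.L0) = lfpOf G.bellman := by
  apply le_antisymm
  · refine iSup_le fun n => le_sInf fun x hx => ?_
    induction n with
    | zero => exact (G.L0_le_bellman x).trans hx
    | succ n ih =>
      rw [Function.iterate_succ_apply']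
      exact (G.bellman_mono ih).trans hx
  · have hmono : Monotone fun n : ℕ => G.bellman^[n] G.L0 :=
      G.bellman_mono.monotone_iterate_of_le_map (G.L0_le_bellman _)
    have hfix := isFixedPt_of_tendsto_iterate (tendsto_atTop_iSup hmono)
      G.bellman_continuous.continuousAt
    exact sInf_le hfix.le
end
end

section
/- Sink states have value zero: if Z ⊆ S satisfies Z ∩ F = ∅ and for every s ∈ Z and every a ∈ Av(s) one has Post(s,a) ⊆ Z (where Post(s,a) := {s' ∈ S : δ(s,a,s') > 0}), then V(s) = 0 for every s ∈ Z, where V = lfp(B). -/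
/-! The indicator function of the complement of `Z` is a pre-fixpoint of the Bellman operator:
from a state of `Z` every available action leads back into `Z` almost surely, so each expected
value there is `0`. The least fixpoint is the infimum of the pre-fixpoints, so it lies below this
indicator and vanishes on `Z`. -/

noncomputable section
open Classical Finset

variable {S A : Type} [Fintype S] [Nonempty S] [Fintype A]

/-- Sink states have value zero: if `Z` is disjoint from the goal states and closed
under all available actions (every `Post(s,a) ⊆ Z`), then the value `V = lfp(B)`
is `0` on `Z`. -/
theorem SSG.sink_value_zero (G : SSG S A) (Z : Set S) (hZF : Z ∩ G.F = ∅)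
    (hclosed : ∀ s ∈ Z, ∀ a ∈ G.Av s, {s' | 0 < G.tr s a s'} ⊆ Z) :
    ∀ s ∈ Z, lfpOf G.bellman s = 0 := by
  intro s hs
  let f : S → unitInterval := fun t => if t ∈ Z then 0 else 1
  have hsum : ∀ t ∈ Z, ∀ a ∈ G.Av t, G.sumR f t a = 0 := by
    intro t ht a ha
    refine Finset.sum_eq_zero fun t' _ => ?_
    by_cases h : t' ∈ Z
    · simp [f, h]
    · have h0 : G.tr t a t' = 0 :=
        le_antisymm (not_lt.mp fun hpos => h (hclosed t ht a ha hpos)) (G.tr_nonneg t a ha t')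
      simp [h0]
  have hf : G.bellman f ≤ f := by
    intro t
    by_cases ht : t ∈ Z
    · have htF : t ∉ G.F := fun h => by
        have : t ∈ Z ∩ G.F := ⟨ht, h⟩
        simp [hZF] at this
      have hft : f t = 0 := if_pos ht
      rw [hft]
      unfold SSG.bellman
      rw [if_neg htF]
      split_ifs
      · refine Finset.sup'_le _ _ fun a _ => ?_
        exact Subtype.mk_le_mk.mpr (hsum t ht a.1 a.2).le
      · obtain ⟨a, ha⟩ := G.avNonempty t
        refine (Finset.inf'_le _ (Finset.mem_attach _ ⟨a, ha⟩)).trans ?_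
        exact Subtype.mk_le_mk.mpr (hsum t ht a ha).le
    · have hft : f t = 1 := if_neg ht
      rw [hft]
      exact unitInterval.le_one'
  have hle : lfpOf G.bellman ≤ f := sInf_le hf
  have hfs : f s = 0 := if_pos hs
  exact le_antisymm ((hle s).trans_eq hfs) unitInterval.nonneg'
end
end

section
/- Soundness of deflating on simple end components: suppose T ⊆ S satisfies the SEC condition V(s) = bexit_V(T) for all s ∈ T, where V = lfp(B). Then deflate_T(V) = V, and for every value function f with V ≤ f pointwise one has V ≤ deflate_T(f) pointwise. -/
/-!
The set of exiting pairs does not depend on the value function and expectations are monotone, so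
`SSG.bexit` is monotone. On `T` the SEC condition says `V s = bexit_V(T)`: hence capping `V` by
its best exit changes nothing, and `V ≤ f` gives `V s = bexit_V(T) ≤ bexit_f(T)`.
-/

noncomputable section
open Classical Finset

variable {S A : Type} [Fintype S] [Nonempty S] [Fintype A]

/-- Exiting state-action pairs of `T`: a Maximizer state `s ∈ T` together with an
available action `a` whose set of successors `Post(s,a) = {s' | δ(s,a,s') > 0}`
is not contained in `T`. -/
noncomputable def SSG.exits (G : SSG S A) (T : Set S) : Finset (S × A) :=
  Finset.univ.filter (fun p =>
    p.1 ∈ T ∧ G.isMax p.1 ∧ p.2 ∈ G.Av p.1 ∧ ¬ ({s' | 0 < G.tr p.1 p.2 s'} ⊆ T))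

lemma SSG.exits_av (G : SSG S A) {T : Set S} {p : S × A} (hp : p ∈ G.exits T) :
    p.2 ∈ G.Av p.1 :=
  (Finset.mem_filter.mp hp).2.2.2.1

/-- The best exit from `T` according to `f`: the maximum of `Σ_{s'} δ(s,a,s')·f(s')`
over all exiting state-action pairs of `T`, with the maximum over the empty set
defined to be `0`. -/
noncomputable def SSG.bexit (G : SSG S A) (T : Set S) (f : S → unitInterval) : unitInterval :=
  (G.exits T).attach.fold (· ⊔ ·) 0
    (fun p => (⟨G.sumR f p.1.1 p.1.2, G.sumR_mem f (G.exits_av p.2)⟩ : unitInterval))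

/-- The deflate operator: on `T` it caps the estimate by the best exit of `T`,
outside of `T` it leaves the estimate unchanged. -/
noncomputable def SSG.deflate (G : SSG S A) (T : Set S) (f : S → unitInterval) :
    S → unitInterval :=
  fun s => if s ∈ T then min (f s) (G.bexit T f) else f s

lemma SSG.sumR_mono_s8 (G : SSG S A) {f g : S → unitInterval} (hfg : f ≤ g) {s : S} {a : A}
    (ha : a ∈ G.Av s) : G.sumR f s a ≤ G.sumR g s a :=
  Finset.sum_le_sum fun s' _ => mul_le_mul_of_nonneg_left (hfg s') (G.tr_nonneg s a ha s')

lemma fold_sup_mono {ι : Type*} (t : Finset ι) {u v : ι → unitInterval}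
    (huv : ∀ i, u i ≤ v i) :
    t.fold (β := unitInterval) (· ⊔ ·) 0 u ≤ t.fold (β := unitInterval) (· ⊔ ·) 0 v := by
  induction t using Finset.induction_on with
  | empty => simp
  | insert i t hi ih =>
    rw [Finset.fold_insert hi, Finset.fold_insert hi]
    exact sup_le_sup (huv i) ih

lemma SSG.bexit_mono (G : SSG S A) (T : Set S) {f g : S → unitInterval} (hfg : f ≤ g) :
    G.bexit T f ≤ G.bexit T g :=
  fold_sup_mono _ fun p => G.sumR_mono_s8 hfg (G.exits_av p.2)

/-- Soundness of deflating on simple end components: if all states of `T` have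
value equal to the best exit of `T` (SEC condition), then deflating fixes the
value `V = lfp(B)` and never decreases an over-approximation of `V` below `V`. -/
theorem SSG.deflate_sound (G : SSG S A) (T : Set S)
    (hSEC : ∀ s ∈ T, lfpOf G.bellman s = G.bexit T (lfpOf G.bellman)) :
    G.deflate T (lfpOf G.bellman) = lfpOf G.bellman ∧
      ∀ f : S → unitInterval, lfpOf G.bellman ≤ f → lfpOf G.bellman ≤ G.deflate T f := by
  constructor
  · funext s
    by_cases hs : s ∈ T
    · simp only [SSG.deflate, if_pos hs]
      exact min_eq_left (hSEC s hs).le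
    · simp only [SSG.deflate, if_neg hs]
  · intro f hf s
    by_cases hs : s ∈ T
    · simp only [SSG.deflate, if_pos hs]
      exact le_min (hf s) ((hSEC s hs).le.trans (G.bexit_mono T hf))
    · simp only [SSG.deflate, if_neg hs]
      exact hf s
end
end

section
/- Let (P, ≤) be a complete lattice, B : P → P a monotone map, and d : P → P a monotone map such that d(x) ≤ x for all x ∈ P and d(x) = x for all x with x ≤ lfp(B). Then lfp(d ∘ B) = lfp(B), where lfp denotes the least fixpoint guaranteed by the Knaster–Tarski theorem. -/
/-- The meet of the pre-fixpoints of a monotone map is itself a pre-fixpoint. -/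
theorem map_lfpOf_le {P : Type*} [CompleteLattice P] {Φ : P → P} (hΦ : Monotone Φ) :
    Φ (lfpOf Φ) ≤ lfpOf Φ :=
  le_sInf fun _ hx => (hΦ (sInf_le hx)).trans hx

/-- If `d` is a monotone deflating operator (`d x ≤ x` everywhere) that fixes every
point below `lfp(B)`, then `lfp(d ∘ B) = lfp(B)`. -/
theorem lfp_deflated_eq {P : Type*} [CompleteLattice P] (B d : P → P)
    (hB : Monotone B) (hd : Monotone d) (hdle : ∀ x, d x ≤ x)
    (hdfix : ∀ x, x ≤ lfpOf B → d x = x) :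
    lfpOf (d ∘ B) = lfpOf B := by
  have hle : lfpOf (d ∘ B) ≤ lfpOf B :=
    sInf_le_sInf fun x hx => (hdle (B x)).trans hx
  refine le_antisymm hle (sInf_le ?_)
  -- `B` maps the down-set of `lfp B` into itself, where `d` acts as the identity;
  -- hence the pre-fixpoint `lfp (d ∘ B)` of `d ∘ B` is also one of `B`.
  have hfix : d (B (lfpOf (d ∘ B))) = B (lfpOf (d ∘ B)) :=
    hdfix _ ((hB hle).trans (map_lfpOf_le hB))
  exact hfix.symm.le.trans (map_lfpOf_le (hd.comp hB))
end

section
/- Park-induction correctness of the deflated operator: let (P, ≤) be a complete lattice, B : P → P monotone, and d : P → P monotone with d(x) ≤ x for all x ∈ P and d(x) = x for all x ≤ lfp(B). Then for every U ∈ P, if d(B(U)) ≤ U then lfp(B) ≤ U. -/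
/-- Park-induction correctness of the deflated operator: if `d` is a monotone
deflating operator that fixes every point below `lfp(B)`, then any `U` with
`d(B(U)) ≤ U` is an upper bound on `lfp(B)`. -/
theorem park_induction_deflated {P : Type*} [CompleteLattice P] (B d : P → P)
    (hB : Monotone B) (hd : Monotone d) (hdle : ∀ x, d x ≤ x)
    (hdfix : ∀ x, x ≤ lfpOf B → d x = x) :
    ∀ U : P, d (B U) ≤ U → lfpOf B ≤ U := by
  intro U hU
  have hpre : B (lfpOf B) ≤ lfpOf B :=
    le_sInf fun x hx => (hB (sInf_le hx)).trans hx
  -- `U ⊓ lfpOf B` is a prefixpoint of `B`: its image lies below `lfpOf B`, where `d` is the identity.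
  have hL : B (U ⊓ lfpOf B) ≤ lfpOf B := (hB inf_le_right).trans hpre
  have hBU : B (U ⊓ lfpOf B) ≤ U :=
    calc B (U ⊓ lfpOf B) = d (B (U ⊓ lfpOf B)) := (hdfix _ hL).symm
      _ ≤ d (B U) := hd (hB inf_le_left)
      _ ≤ U := hU
  have hle : lfpOf B ≤ U ⊓ lfpOf B := sInf_le (le_inf hBU hL)
  exact hle.trans inf_le_left
end

section
/- Sandwich argument for the correctness of precise topological value iteration: let σ be a Maximizer strategy and τ a Minimizer strategy such that lfp(B_σ) = lfp(B_{σ,τ}) and lfp(B_τ) = lfp(B_{σ,τ}) (i.e., σ is optimal against τ and τ is optimal against σ). Then lfp(B) = lfp(B_{σ,τ}); that is, the value of the game equals the value of the Markov chain induced by the pair of strategies (σ, τ). -/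
/-!
Pointwise, `B_σ f ≤ B f ≤ B_τ f`, since a single action's expectation is at most the maximum
and at least the minimum over the available actions. The Knaster–Tarski infimum `lfpOf` is
monotone in the operator (a larger operator has fewer pre-fixpoints), whence
`lfp B_σ ≤ lfp B ≤ lfp B_τ`. Both ends equal `lfp B_{σ,τ}` by hypothesis.
-/

noncomputable section
open Classical Finset

variable {S A : Type} [Fintype S] [Nonempty S] [Fintype A]

/-- The Bellman operator with a fixed Maximizer strategy `σ`. -/
noncomputable def SSG.bellmanMax (G : SSG S A) (σ : S → A)
    (hσ : ∀ s, G.isMax s → σ s ∈ G.Av s) (f : S → unitInterval) : S → unitInterval :=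
  fun s =>
    if s ∈ G.F then 1
    else if hM : G.isMax s then ⟨G.sumR f s (σ s), G.sumR_mem f (hσ s hM)⟩
    else
      (G.Av s).attach.inf' (Finset.attach_nonempty_iff.mpr (G.avNonempty s))
        (fun a => (⟨G.sumR f s a.1, G.sumR_mem f a.2⟩ : unitInterval))

/-- The Bellman operator with a fixed Minimizer strategy `τ`. -/
noncomputable def SSG.bellmanMin (G : SSG S A) (τ : S → A)
    (hτ : ∀ s, ¬ G.isMax s → τ s ∈ G.Av s) (f : S → unitInterval) : S → unitInterval :=
  fun s =>
    if s ∈ G.F then 1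
    else if hM : G.isMax s then
      (G.Av s).attach.sup' (Finset.attach_nonempty_iff.mpr (G.avNonempty s))
        (fun a => (⟨G.sumR f s a.1, G.sumR_mem f a.2⟩ : unitInterval))
    else ⟨G.sumR f s (τ s), G.sumR_mem f (hτ s hM)⟩

/-- The Bellman operator of the Markov chain induced by fixing both strategies. -/
noncomputable def SSG.bellmanBoth (G : SSG S A) (σ τ : S → A)
    (hσ : ∀ s, G.isMax s → σ s ∈ G.Av s) (hτ : ∀ s, ¬ G.isMax s → τ s ∈ G.Av s)
    (f : S → unitInterval) : S → unitInterval :=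
  fun s =>
    if s ∈ G.F then 1
    else if hM : G.isMax s then ⟨G.sumR f s (σ s), G.sumR_mem f (hσ s hM)⟩
    else ⟨G.sumR f s (τ s), G.sumR_mem f (hτ s hM)⟩

/-- Monotonicity of the operators themselves is not required: `lfpOf` is an infimum over
pre-fixpoints, and every pre-fixpoint of `Ψ` is one of `Φ`. -/
lemma lfpOf_mono {P : Type*} [CompleteLattice P] {Φ Ψ : P → P} (h : ∀ x, Φ x ≤ Ψ x) :
    lfpOf Φ ≤ lfpOf Ψ :=
  sInf_le_sInf fun x hx => (h x).trans hx

lemma SSG.bellmanMax_le_bellman (G : SSG S A) (σ : S → A)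
    (hσ : ∀ s, G.isMax s → σ s ∈ G.Av s) (f : S → unitInterval) :
    G.bellmanMax σ hσ f ≤ G.bellman f := by
  intro s
  unfold SSG.bellmanMax SSG.bellman
  by_cases hF : s ∈ G.F
  · simp only [if_pos hF, le_refl]
  by_cases hM : G.isMax s
  · simp only [if_neg hF, dif_pos hM, if_pos hM]
    exact Finset.le_sup' (fun a : {a // a ∈ G.Av s} =>
      (⟨G.sumR f s a.1, G.sumR_mem f a.2⟩ : unitInterval))
      (Finset.mem_attach _ ⟨σ s, hσ s hM⟩)
  · simp only [if_neg hF, dif_neg hM, if_neg hM, le_refl]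

lemma SSG.bellman_le_bellmanMin (G : SSG S A) (τ : S → A)
    (hτ : ∀ s, ¬ G.isMax s → τ s ∈ G.Av s) (f : S → unitInterval) :
    G.bellman f ≤ G.bellmanMin τ hτ f := by
  intro s
  unfold SSG.bellmanMin SSG.bellman
  by_cases hF : s ∈ G.F
  · simp only [if_pos hF, le_refl]
  by_cases hM : G.isMax s
  · simp only [if_neg hF, dif_pos hM, if_pos hM, le_refl]
  · simp only [if_neg hF, dif_neg hM, if_neg hM]
    exact Finset.inf'_le (fun a : {a // a ∈ G.Av s} =>
      (⟨G.sumR f s a.1, G.sumR_mem f a.2⟩ : unitInterval))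
      (Finset.mem_attach _ ⟨τ s, hτ s hM⟩)

/-- Sandwich argument: if `σ` is optimal against `τ` and `τ` is optimal against
`σ`, i.e. `lfp(B_σ) = lfp(B_{σ,τ}) = lfp(B_τ)`, then the value of the game equals
the value of the induced Markov chain: `lfp(B) = lfp(B_{σ,τ})`. -/
theorem SSG.sandwich (G : SSG S A) (σ τ : S → A)
    (hσ : ∀ s, G.isMax s → σ s ∈ G.Av s) (hτ : ∀ s, ¬ G.isMax s → τ s ∈ G.Av s)
    (hσopt : lfpOf (G.bellmanMax σ hσ) = lfpOf (G.bellmanBoth σ τ hσ hτ))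
    (hτopt : lfpOf (G.bellmanMin τ hτ) = lfpOf (G.bellmanBoth σ τ hσ hτ)) :
    lfpOf G.bellman = lfpOf (G.bellmanBoth σ τ hσ hτ) := by
  exact le_antisymm
    ((lfpOf_mono (G.bellman_le_bellmanMin τ hτ)).trans_eq hτopt)
    (hσopt.symm.trans_le (lfpOf_mono (G.bellmanMax_le_bellman σ hσ)))
end
end

section
/- Invertibility of the substochastic matrix used to solve the induced Markov chain: let n ∈ ℕ and let Q be an n × n real matrix with Q_{ij} ≥ 0 for all i, j and Σ_j Q_{ij} ≤ 1 for every row i (a substochastic matrix). Suppose that for every index i there exists m ∈ ℕ with Σ_j (Q^m)_{ij} < 1 (some probability mass escapes from every state). Then the matrix I − Q is invertible. -/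
/-!
It suffices that `I − Q` has trivial kernel. If `Q v = v`, then `Q ^ m v = v` for every `m`. At an
index `i` where `|v i|` is maximal, and with `m` chosen so that row `i` of the nonnegative matrix
`Q ^ m` has sum `s < 1`, this gives `|v i| ≤ s * |v i|`, hence `v i = 0` and so `v = 0`.
-/

open Finset

theorem pow_entry_nonneg {n : ℕ} {Q : Matrix (Fin n) (Fin n) ℝ}
    (hnonneg : ∀ i j, 0 ≤ Q i j) (m : ℕ) (i j : Fin n) : 0 ≤ (Q ^ m) i j := by
  induction m generalizing i j with
  | zero =>
    rw [pow_zero, Matrix.one_apply]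
    split_ifs <;> norm_num
  | succ k ih =>
    rw [pow_succ, Matrix.mul_apply]
    exact Finset.sum_nonneg fun l _ => mul_nonneg (ih i l) (hnonneg l j)

theorem pow_mulVec_fixed {n : ℕ} {Q : Matrix (Fin n) (Fin n) ℝ} {v : Fin n → ℝ}
    (hv : Q.mulVec v = v) (m : ℕ) : (Q ^ m).mulVec v = v := by
  induction m with
  | zero => simp
  | succ k ih => rw [pow_succ, ← Matrix.mulVec_mulVec, hv, ih]

/-- A substochastic matrix from which some probability mass eventually escapes
from every state gives rise to an invertible matrix `I − Q`. -/
theorem substochastic_invertible (n : ℕ) (Q : Matrix (Fin n) (Fin n) ℝ)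
    (hnonneg : ∀ i j, 0 ≤ Q i j) (hrow : ∀ i, ∑ j, Q i j ≤ 1)
    (hescape : ∀ i, ∃ m : ℕ, ∑ j, (Q ^ m) i j < 1) :
    IsUnit (1 - Q) := by
  rw [Matrix.isUnit_iff_isUnit_det, isUnit_iff_ne_zero]
  intro hdet
  obtain ⟨v, hv0, hv⟩ := Matrix.exists_mulVec_eq_zero_iff.mpr hdet
  have hfix : Q.mulVec v = v := by
    rw [Matrix.sub_mulVec, Matrix.one_mulVec, sub_eq_zero] at hv
    exact hv.symm
  obtain ⟨k, hk⟩ := Function.ne_iff.mp hv0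
  obtain ⟨i, -, hi⟩ := Finset.exists_max_image Finset.univ (fun j => |v j|) ⟨k, mem_univ k⟩
  have hpos : 0 < |v i| := (abs_pos.mpr hk).trans_le (hi k (mem_univ k))
  obtain ⟨m, hm⟩ := hescape i
  have hle : |v i| ≤ (∑ j, (Q ^ m) i j) * |v i| := by
    calc |v i| = |∑ j, (Q ^ m) i j * v j| :=
          congrArg abs (congrFun (pow_mulVec_fixed hfix m) i).symm
      _ ≤ ∑ j, |(Q ^ m) i j * v j| := Finset.abs_sum_le_sum_abs _ _
      _ ≤ ∑ j, (Q ^ m) i j * |v i| := by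
          refine Finset.sum_le_sum fun j _ => ?_
          rw [abs_mul, abs_of_nonneg (pow_entry_nonneg hnonneg m i j)]
          exact mul_le_mul_of_nonneg_left (hi j (mem_univ j)) (pow_entry_nonneg hnonneg m i j)
      _ = (∑ j, (Q ^ m) i j) * |v i| := (Finset.sum_mul _ _ _).symm
  nlinarith
end
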